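/- Let Z be a proper metric space (all closed balls are compact) on which a group G acts isometrically and properly. Then the topological (covering) dimension of the quotient space G\Z is at most the topological dimension of Z. -/

import Mathlib

/-- `DimLE X n`: every open cover of `X` has an open refinement covering `X`
in which no `n+2` distinct sets have a common point (covering dimension ≤ n). -/
def DimLE (X : Type*) [TopologicalSpace X] (n : ℕ) : Prop :=
  ∀ U : Set (Set X), (∀ u ∈ U, IsOpen u) → ⋃₀ U = Set.univ →
    ∃ V : Set (Set X), (∀ v ∈ V, IsOpen v) ∧ ⋃₀ V = Set.univ ∧
      (∀ v ∈ V, ∃ u ∈ U, v ⊆ u) ∧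
      ∀ s : Finset (Set X), ↑s ⊆ V → (⋂₀ (s : Set (Set X))).Nonempty → s.card ≤ n + 1

/-- Lebesgue covering dimension, as an element of `ℕ∞` (⊤ if no bound exists). -/
noncomputable def covDim (X : Type*) [TopologicalSpace X] : ℕ∞ :=
  sInf {n : ℕ∞ | ∃ d : ℕ, n = (d : ℕ∞) ∧ DimLE X d}

open Set Topology

/-- Swelling: from a locally finite closed cover of order `≤ m` to an open cover. -/
lemma aux_swell {X ι : Type*} [MetricSpace X] (F U : ι → Set X) (m : ℕ)
    (hF : ∀ i, IsClosed (F i)) (hlf : LocallyFinite F)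
    (hU : ∀ i, IsOpen (U i)) (hFU : ∀ i, F i ⊆ U i)
    (hord : ∀ x, ∀ s : Finset ι, (∀ i ∈ s, x ∈ F i) → s.card ≤ m) :
    ∃ V : ι → Set X, (∀ i, IsOpen (V i)) ∧ (∀ i, F i ⊆ V i) ∧ (∀ i, V i ⊆ U i) ∧
      ∀ x, ∀ s : Finset ι, (∀ i ∈ s, x ∈ V i) → s.card ≤ m := by
  classical
  let good : X → ℝ → Prop := fun y r =>
    ∀ s : Finset ι, (∀ i ∈ s, (Metric.ball y r ∩ F i).Nonempty) → s.card ≤ m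
  let V0 : ι → Set X := fun i => {y | ∃ r : ℝ, good y r ∧ ∃ p ∈ F i, dist p y < r}
  have hV0 : ∀ i, IsOpen (V0 i) := by
    intro i
    rw [Metric.isOpen_iff]
    rintro y ⟨r, hg, p, hp, hpr⟩
    refine ⟨(r - dist p y) / 2, by linarith, ?_⟩
    intro y' hy'
    rw [Metric.mem_ball] at hy'
    refine ⟨r - (r - dist p y) / 2, ?_, p, hp, ?_⟩
    · intro s hs
      apply hg s
      intro i hi
      obtain ⟨w, hw, hwF⟩ := hs i hi
      refine ⟨w, ?_, hwF⟩
      rw [Metric.mem_ball] at hw ⊢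
      have := dist_triangle w y' y
      linarith
    · have := dist_triangle p y y'
      rw [dist_comm y y'] at this
      linarith
  have hgood : ∀ x, ∃ r > 0, good x r := by
    intro x
    have hcl : IsClosed (⋃ i : {i // x ∉ F i}, F i) :=
      (hlf.comp_injective Subtype.val_injective).isClosed_iUnion fun i => hF i
    have hx : x ∈ (⋃ i : {i // x ∉ F i}, F i)ᶜ := by
      simp
    obtain ⟨r, hr, hb⟩ := Metric.isOpen_iff.1 hcl.isOpen_compl x hx
    refine ⟨r, hr, ?_⟩
    intro s hs
    apply hord x s
    intro i hi
    by_contra hxi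
    obtain ⟨w, hw, hwF⟩ := hs i hi
    exact hb hw (mem_iUnion.2 ⟨⟨i, hxi⟩, hwF⟩)
  refine ⟨fun i => V0 i ∩ U i, fun i => (hV0 i).inter (hU i), ?_, fun i => inter_subset_right, ?_⟩
  · intro i x hx
    obtain ⟨r, hr, hg⟩ := hgood x
    exact ⟨⟨r, hg, x, hx, by simpa using hr⟩, hFU i hx⟩
  · intro x s hs
    rcases s.eq_empty_or_nonempty with rfl | hne
    · simp
    have h1 : ∀ i : ι, ∃ r : ℝ, i ∈ s → good x r ∧ ∃ p ∈ F i, dist p x < r := by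
      intro i
      by_cases hi : i ∈ s
      · obtain ⟨r, h⟩ := (hs i hi).1
        exact ⟨r, fun _ => h⟩
      · exact ⟨0, fun h => absurd h hi⟩
    choose r hr using h1
    obtain ⟨j, hj, hmax⟩ := s.exists_max_image r hne
    apply (hr j hj).1 s
    intro i hi
    obtain ⟨p, hp, hd⟩ := (hr i hi).2
    exact ⟨p, by rw [Metric.mem_ball]; exact hd.trans_le (hmax i hi), hp⟩

/-- Refining a cover along one compact piece. -/
lemma aux_piece {Z X ι : Type*} [TopologicalSpace Z] [TopologicalSpace X] [T2Space X]
    {n : ℕ} (hZ : DimLE Z n) (q : Z → X) (hq : Continuous q) (K : Set Z) (hK : IsCompact K)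
    (hinj : InjOn q K) (U : ι → Set X) (hU : ∀ i, IsOpen (U i)) (hUc : ⋃ i, U i = univ) :
    ∃ W : ι → Set X, (∀ i, IsOpen (W i)) ∧ (⋃ i, W i = univ) ∧ (∀ i, W i ⊆ U i) ∧
      ∀ x ∈ q '' K, ∀ s : Finset ι, (∀ i ∈ s, x ∈ W i) → s.card ≤ n + 1 := by
  classical
  obtain ⟨V, hVo, hVc, hVr, hVord⟩ := hZ (range fun i => q ⁻¹' U i)
    (by rintro _ ⟨i, rfl⟩; exact (hU i).preimage hq)
    (by
      rw [sUnion_range, ← preimage_iUnion, hUc, preimage_univ])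
  have h1 : ∀ v : V, ∃ i, v.1 ⊆ q ⁻¹' U i := by
    intro v
    obtain ⟨_, ⟨i, rfl⟩, h⟩ := hVr v.1 v.2
    exact ⟨i, h⟩
  choose a ha using h1
  let A : ι → Set Z := fun i => ⋃ v : {v : V // a v = i}, v.1.1
  have hAo : ∀ i, IsOpen (A i) := fun i => isOpen_iUnion fun v => hVo _ v.1.2
  have hAU : ∀ i, A i ⊆ q ⁻¹' U i := by
    intro i
    refine iUnion_subset ?_
    rintro ⟨v, rfl⟩
    exact ha v
  have hAc : ∀ z, ∃ i, z ∈ A i := by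
    intro z
    have : z ∈ ⋃₀ V := hVc ▸ mem_univ z
    obtain ⟨v, hv, hz⟩ := this
    exact ⟨a ⟨v, hv⟩, mem_iUnion.2 ⟨⟨⟨v, hv⟩, rfl⟩, hz⟩⟩
  refine ⟨fun i => U i \ q '' (K \ A i), ?_, ?_, fun i => sdiff_subset, ?_⟩
  · intro i
    exact (hU i).sdiff ((hK.diff (hAo i)).image hq).isClosed
  · rw [iUnion_eq_univ_iff]
    intro x
    by_cases hx : x ∈ q '' K
    · obtain ⟨z, hz, rfl⟩ := hx
      obtain ⟨i, hi⟩ := hAc z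
      refine ⟨i, hAU i hi, ?_⟩
      rintro ⟨w, ⟨hwK, hwA⟩, hw⟩
      exact hwA (hinj hwK hz hw ▸ hi)
    · obtain ⟨i, hi⟩ := iUnion_eq_univ_iff.1 hUc x
      exact ⟨i, hi, fun h => hx (image_mono sdiff_subset h)⟩
  · rintro _ ⟨z, hz, rfl⟩ s hs
    have h2 : ∀ i : s, ∃ v : V, a v = i ∧ z ∈ v.1 := by
      rintro ⟨i, hi⟩
      have hzA : z ∈ A i := by
        by_contra h
        exact (hs i hi).2 ⟨z, ⟨hz, h⟩, rfl⟩
      obtain ⟨v, hv⟩ := mem_iUnion.1 hzA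
      exact ⟨v.1, v.2, hv⟩
    choose b hb hzb using h2
    have hbi : Function.Injective fun i => (b i).1 := by
      intro i j hij
      have : b i = b j := Subtype.ext hij
      exact Subtype.ext (by rw [← hb i, ← hb j, this])
    have := hVord (Finset.univ.image fun i => (b i).1)
      (by
        intro v hv
        simp only [Finset.coe_image, Finset.coe_univ, image_univ] at hv
        obtain ⟨i, rfl⟩ := hv
        exact (b i).2)
      ⟨z, by
        intro v hv
        simp only [Finset.coe_image, Finset.coe_univ, image_univ] at hv
        obtain ⟨i, rfl⟩ := hv
        exact hzb i⟩
    rw [Finset.card_image_of_injective _ hbi] at this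
    simpa using this

lemma aux_sum {Z X : Type*} [TopologicalSpace Z] [MetricSpace X]
    {n : ℕ} (hZ : DimLE Z n) (q : Z → X) (hq : Continuous q) (K : ℕ → Set Z)
    (hK : ∀ k, IsCompact (K k)) (hinj : ∀ k, InjOn q (K k))
    (hcov : ∀ x, ∃ k, x ∈ q '' K k) : DimLE X n := by
  classical
  intro U hUo hUc
  obtain ⟨u0, hu0o, hu0c, hu0f, hu0s⟩ := precise_refinement (fun i : U => i.1)
    (fun i => hUo _ i.2) (by rw [← sUnion_eq_iUnion, hUc])
  let P := {u : U → Set X // (∀ i, IsOpen (u i)) ∧ (⋃ i, u i = univ) ∧ LocallyFinite u}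
  have step : ∀ (k : ℕ) (u : P), ∃ u' : P, (∀ i, closure (u'.1 i) ⊆ u.1 i) ∧
      ∀ x ∈ q '' K k, ∀ s : Finset U, (∀ i ∈ s, x ∈ closure (u'.1 i)) → s.card ≤ n + 1 := by
    rintro k ⟨u, huo, huc, huf⟩
    obtain ⟨W, hWo, hWc, hWu, hWord⟩ := aux_piece hZ q hq (K k) (hK k) (hinj k) u huo huc
    have hWf : LocallyFinite W := huf.subset hWu
    obtain ⟨v, hvc, hvo, hvW⟩ := exists_iUnion_eq_closure_subset hWo hWf.point_finite hWc
    refine ⟨⟨v, hvo, hvc, hWf.subset fun i => subset_closure.trans (hvW i)⟩,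
      fun i => (hvW i).trans (hWu i), ?_⟩
    intro x hx s hs
    exact hWord x hx s fun i hi => hvW i (hs i hi)
  choose f hf1 hf2 using step
  let u : ℕ → P := fun k => Nat.rec ⟨u0, hu0o, hu0c, hu0f⟩ (fun k v => f k v) k
  have hus : ∀ k, u (k + 1) = f k (u k) := fun k => rfl
  have hu0 : (u 0).1 = u0 := rfl
  have hcl : ∀ k i, closure ((u (k + 1)).1 i) ⊆ (u k).1 i := fun k i => by
    rw [hus]; exact hf1 k (u k) i
  have hanti : ∀ i, Antitone fun k => (u k).1 i := fun i =>
    antitone_nat_of_succ_le fun k => subset_closure.trans (hcl k i)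
  let F : U → Set X := fun i => ⋂ k, closure ((u (k + 1)).1 i)
  have hFu0 : ∀ i, F i ⊆ u0 i := fun i => (iInter_subset _ 0).trans (hcl 0 i)
  have hFc : ∀ x, ∃ i, x ∈ F i := by
    intro x
    by_contra hno
    push Not at hno
    have hno' : ∀ i, ∃ k, x ∉ (u k).1 i := by
      intro i
      by_contra h
      push Not at h
      exact hno i (mem_iInter.2 fun k => subset_closure (h (k + 1)))
    choose κ hκ using hno'
    have hfin := hu0f.point_finite x
    obtain ⟨N, hN⟩ := (hfin.image κ).bddAbove
    obtain ⟨i, hi⟩ := iUnion_eq_univ_iff.1 (u N).2.2.1 x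
    have hi0 : x ∈ u0 i := hanti i (Nat.zero_le N) hi
    exact hκ i (hanti i (hN ⟨i, hi0, rfl⟩) hi)
  obtain ⟨V, hVo, hFV, hVu, hVord⟩ := aux_swell F u0 (n + 1)
    (fun i => isClosed_iInter fun k => isClosed_closure) (hu0f.subset hFu0) hu0o hFu0 (by
      intro x s hs
      obtain ⟨k, hk⟩ := hcov x
      exact hf2 k (u k) x hk s fun i hi => by
        have := mem_iInter.1 (hs i hi) k
        rwa [hus] at this)
  refine ⟨range V, ?_, ?_, ?_, ?_⟩
  · rintro _ ⟨i, rfl⟩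
    exact hVo i
  · rw [sUnion_range, iUnion_eq_univ_iff]
    intro x
    obtain ⟨i, hi⟩ := hFc x
    exact ⟨i, hFV i hi⟩
  · rintro _ ⟨i, rfl⟩
    exact ⟨i.1, i.2, (hVu i).trans (hu0s i)⟩
  · rintro s hs ⟨x, hx⟩
    have h3 : ∀ v : s, ∃ i, V i = v.1 := fun v => hs v.2
    choose c hc using h3
    have hci : Function.Injective c := fun v w h => Subtype.ext (by rw [← hc v, ← hc w, h])
    have := hVord x (Finset.univ.image c) (by
      intro i hi
      simp only [Finset.mem_image, Finset.mem_univ, true_and] at hi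
      obtain ⟨v, rfl⟩ := hi
      rw [hc]
      exact hx v.1 v.2)
    rw [Finset.card_image_of_injective _ hci] at this
    simpa using this

lemma aux_orbit {G Z : Type*} [Group G] [MetricSpace Z] [MulAction G Z]
    (hproper : ∀ z : Z, ∃ U : Set Z, IsOpen U ∧ z ∈ U ∧
      {g : G | ((fun z : Z => g • z) '' U ∩ U).Nonempty}.Finite) (x y : Z) :
    ∃ ε > 0, ∀ g : G, dist (g • x) y < ε → g • x = y := by
  obtain ⟨U, hUo, hyU, hfin⟩ := hproper y
  obtain ⟨ρ, hρ, hb⟩ := Metric.isOpen_iff.1 hUo y hyU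
  have hA : (MulAction.orbit G x ∩ U).Finite := by
    rcases (MulAction.orbit G x ∩ U).eq_empty_or_nonempty with h | ⟨_, ⟨g0, rfl⟩, h0⟩
    · rw [h]; exact finite_empty
    · refine (hfin.image fun g => g • g0 • x).subset ?_
      rintro _ ⟨⟨g, rfl⟩, hg⟩
      refine ⟨g * g0⁻¹, ⟨g • x, ⟨g0 • x, h0, ?_⟩, hg⟩, ?_⟩ <;> simp [mul_smul]
  have hc : IsClosed ((MulAction.orbit G x ∩ U) \ {y}) := (hA.subset sdiff_subset).isClosed
  obtain ⟨ε, hε, hb'⟩ := Metric.isOpen_iff.1 (hc.isOpen_compl.inter hUo) y ⟨by simp, hyU⟩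
  refine ⟨ε, hε, fun g hg => ?_⟩
  by_contra hne
  have := hb' (Metric.mem_ball.2 hg)
  exact this.1 ⟨⟨⟨g, rfl⟩, this.2⟩, hne⟩

lemma aux_main {G Z : Type*} [Group G] [MetricSpace Z] [ProperSpace Z] [MulAction G Z]
    (hiso : ∀ g : G, Isometry fun z : Z => g • z)
    (hproper : ∀ z : Z, ∃ U : Set Z, IsOpen U ∧ z ∈ U ∧
      {g : G | ((fun z : Z => g • z) '' U ∩ U).Nonempty}.Finite) {n : ℕ} (hn : DimLE Z n) :
    DimLE (Quotient (MulAction.orbitRel G Z)) n := by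
  classical
  haveI : ContinuousConstSMul G Z := ⟨fun g => (hiso g).continuous⟩
  let q : Z → Quotient (MulAction.orbitRel G Z) := Quotient.mk _
  have hqc : Continuous q := continuous_quotient_mk'
  have hqs : Function.Surjective q := Quotient.mk_surjective
  have hqo : IsOpenMap q := isOpenMap_quotient_mk'_mul
  have hqe : ∀ a b, q a = q b ↔ ∃ g : G, g • b = a := by
    intro a b
    exact Quotient.eq.trans (by rw [MulAction.orbitRel_apply]; rfl)
  haveI : T2Space (Quotient (MulAction.orbitRel G Z)) := by
    refine ⟨fun a b hab => ?_⟩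
    obtain ⟨x, rfl⟩ := hqs a
    obtain ⟨y, rfl⟩ := hqs b
    obtain ⟨ε, hε, h⟩ := aux_orbit hproper x y
    refine ⟨q '' Metric.ball x (ε / 2), q '' Metric.ball y (ε / 2), hqo _ Metric.isOpen_ball,
      hqo _ Metric.isOpen_ball, ⟨x, by simpa using hε, rfl⟩, ⟨y, by simpa using hε, rfl⟩, ?_⟩
    rw [Set.disjoint_left]
    rintro _ ⟨w, hw, rfl⟩ ⟨w', hw', he⟩
    obtain ⟨g, rfl⟩ := (hqe _ _).1 he
    rw [Metric.mem_ball] at hw hw'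
    have h1 : dist (g • x) (g • w) = dist x w := (hiso g).dist_eq x w
    have h2 := dist_triangle (g • x) (g • w) y
    rw [h1, dist_comm x w] at h2
    exact hab ((hqe _ _).2 ⟨g, h g (by linarith)⟩).symm
  haveI : SecondCountableTopology (Quotient (MulAction.orbitRel G Z)) :=
    ContinuousConstSMul.secondCountableTopology
  haveI : WeaklyLocallyCompactSpace (Quotient (MulAction.orbitRel G Z)) := by
    refine ⟨fun a => ?_⟩
    obtain ⟨x, rfl⟩ := hqs a
    exact ⟨q '' Metric.closedBall x 1, (isCompact_closedBall x 1).image hqc,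
      hqo.image_mem_nhds (Metric.closedBall_mem_nhds x one_pos)⟩
  letI := TopologicalSpace.metrizableSpaceMetric (Quotient (MulAction.orbitRel G Z))
  have hr : ∀ z : Z, ∃ r > 0, ∀ w ∈ Metric.closedBall z r, ∀ g : G,
      g • w ∈ Metric.closedBall z r → g • z = z := by
    intro z
    obtain ⟨ε, hε, h⟩ := aux_orbit hproper z z
    refine ⟨ε / 3, by positivity, fun w hw g hg => h g ?_⟩
    rw [Metric.mem_closedBall] at hw hg
    have h1 : dist (g • z) (g • w) = dist z w := (hiso g).dist_eq z w
    have h2 := dist_triangle (g • z) (g • w) z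
    rw [h1, dist_comm z w] at h2
    linarith
  choose r hr0 hr using hr
  have hfs : ∀ z : Z, {g : G | g • z = z}.Finite := by
    intro z
    obtain ⟨U, _, hz, hf⟩ := hproper z
    exact hf.subset fun g hg => ⟨z, ⟨z, hz, hg⟩, hz⟩
  let K : Z → Set Z := fun z =>
    Metric.closedBall z (r z) ∩ ⋂ g : {g : G // g • z = z}, {w | g.1 • w = w}
  have hKc : ∀ z, IsCompact (K z) := fun z =>
    (isCompact_closedBall z (r z)).inter_right (isClosed_iInter fun g =>
      isClosed_eq (continuous_const_smul g.1) continuous_id)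
  have hKi : ∀ z, InjOn q (K z) := by
    rintro z a ⟨ha, _⟩ b ⟨hb, hb'⟩ hab
    obtain ⟨g, rfl⟩ := (hqe _ _).1 hab
    exact mem_iInter.1 hb' ⟨g, hr z b hb g ha⟩
  let S : ℕ → Set Z := fun k => {z | {g : G | g • z = z}.ncard = k}
  have hKS : ∀ k, ∀ z ∈ S k, K z ∈ 𝓝[S k] z := by
    intro k z hz
    filter_upwards [mem_nhdsWithin_of_mem_nhds (Metric.closedBall_mem_nhds z (hr0 z)),
      self_mem_nhdsWithin] with w hw hwS
    refine ⟨hw, ?_⟩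
    have hsub : {g : G | g • w = w} ⊆ {g : G | g • z = z} := fun g hg =>
      hr z w hw g (by rw [show g • w = w from hg]; exact hw)
    have heq := Set.eq_of_subset_of_ncard_le hsub (le_of_eq (hz.trans hwS.symm)) (hfs z)
    refine mem_iInter.2 fun g => ?_
    have : g.1 ∈ {g : G | g • w = w} := heq ▸ g.2
    exact this
  have hcount : ∀ k, ∃ t : Set Z, t.Countable ∧ S k ⊆ ⋃ z ∈ t, K z := by
    intro k
    obtain ⟨t, _, ht, h⟩ := TopologicalSpace.countable_cover_nhdsWithin (hKS k)
    exact ⟨t, ht, h⟩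
  choose t htc ht using hcount
  have hcov : ∀ z, ∃ y ∈ ⋃ k, t k, z ∈ K y := by
    intro z
    obtain ⟨y, hy, h⟩ := mem_iUnion₂.1 (ht _ (show z ∈ S _ from rfl))
    exact ⟨y, mem_iUnion.2 ⟨_, hy⟩, h⟩
  rcases isEmpty_or_nonempty Z with hZ | ⟨⟨z0⟩⟩
  · exact aux_sum hn q hqc (fun _ => ∅) (fun _ => isCompact_empty) (fun _ => injOn_empty _)
      (fun x => (hZ.false (hqs x).choose).elim)
  · obtain ⟨y, -, -⟩ := hcov z0
    obtain ⟨e, he⟩ := (countable_iUnion htc).exists_eq_range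
      (by obtain ⟨y, hy, -⟩ := hcov z0; exact ⟨y, hy⟩)
    refine aux_sum hn q hqc (fun k => K (e k)) (fun k => hKc _) (fun k => hKi _) fun x => ?_
    obtain ⟨z, rfl⟩ := hqs x
    obtain ⟨y, hy, hz⟩ := hcov z
    rw [he] at hy
    obtain ⟨k, rfl⟩ := hy
    exact ⟨k, z, hz, rfl⟩

theorem stmt0 {G Z : Type*} [Group G] [MetricSpace Z] [ProperSpace Z] [MulAction G Z]
    (hiso : ∀ g : G, Isometry fun z : Z => g • z)
    (hproper : ∀ z : Z, ∃ U : Set Z, IsOpen U ∧ z ∈ U ∧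
      {g : G | ((fun z : Z => g • z) '' U ∩ U).Nonempty}.Finite) :
    covDim (Quotient (MulAction.orbitRel G Z)) ≤ covDim Z := by
  apply sInf_le_sInf
  rintro _ ⟨d, rfl, hd⟩
  exact ⟨d, rfl, aux_main hiso hproper hd⟩
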